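/- arXiv:2109.14179 — 2 statements merged into one kernel-verified Lean document; each statement's English description precedes it below -/
import Mathlib

section
/- Let F ⊆ ℤ³ be a cluster containing the origin, p a prime with |F| a power of p, and h an arbitrary nonzero vector in ℤ³. Then at least one of the following holds: (1) every line in ℝ³ parallel to h intersects F in a set of size divisible by p; or (2) there is a finite set R of rational points in ℝ³/ℤ³ and a finite set V of nonzero vectors in ℤ³ such that ker χ_h ∩ (⋂_{α coprime to |F|} Z(Σ_{g∈F} χ_{αg})) ⊆ ⋃_{ρ∈R} ⋃_{v∈V} {ρ + tv ∈ ℝ³/ℤ³ : t ∈ ℝ}. -/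
/-!
Fix a point `x` with `χ_h(x) = 1` at which all the character sums vanish, and put `z_g = χ_g(x)`.
The exponents `α = 1 + p k` are coprime to `|F|`, so `∑ z_g (z_g ^ p) ^ k = 0` for all `k`.
By Lagrange interpolation, `∑ z_g = 0` over each class `{g ∈ F : z_g ^ p = u}`
(`sum_fiber_eq_zero`). Up to a common factor this is a vanishing sum of `p`-th roots of unity, so
`p` divides the size of each class (`dvd_card_of_sum_eq_zero`), because `Φ_p(1) = p`.

If for some such `x` any two elements of a class differ by a real multiple of `h`, then every line
parallel to `h` meets `F` in a union of classes, which gives the first alternative.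

Otherwise every such `x` satisfies `χ_h(x) = χ_k(x) = 1` for some `k = p (g' - g)` with `g, g' ∈ F`
and `h × k ≠ 0`. For each of the finitely many possible `k`, such points lie on finitely many
rational lines with direction `h × k` (`exists_finset_lines`): a lift of `x` to the unit cube has
integral, bounded inner products with `h` and `k`.
-/

/-- The canonical embedding of `ℤ³` into `ℝ³`. -/
def coe3 (x : Fin 3 → ℤ) : Fin 3 → ℝ := fun i => (x i : ℝ)

/-- The character of the torus `𝕋³ = (ℝ/ℤ)³` associated to `g ∈ ℤ³`:
`χ_g x = e^{2πi⟨g,x⟩}`. -/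
noncomputable def chi (g : Fin 3 → ℤ) (x : Fin 3 → AddCircle (1 : ℝ)) : ℂ :=
  ∏ i, (AddCircle.toCircle (g i • x i) : ℂ)

/-! ### Characters of the torus -/

lemma chi_eq_toCircle (g : Fin 3 → ℤ) (x : Fin 3 → AddCircle (1 : ℝ)) :
    chi g x = ((∑ i, g i • x i : AddCircle (1 : ℝ)).toCircle : ℂ) := by
  simp [chi, Fin.prod_univ_three, Fin.sum_univ_three, AddCircle.toCircle_add]

lemma chi_ne_zero (g : Fin 3 → ℤ) (x : Fin 3 → AddCircle (1 : ℝ)) : chi g x ≠ 0 := by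
  rw [chi_eq_toCircle]; exact Circle.coe_ne_zero _

lemma chi_add (g k : Fin 3 → ℤ) (x : Fin 3 → AddCircle (1 : ℝ)) :
    chi (g + k) x = chi g x * chi k x := by
  simp only [chi, Pi.add_apply, add_smul, AddCircle.toCircle_add, Circle.coe_mul,
    Finset.prod_mul_distrib]

lemma chi_zero (x : Fin 3 → AddCircle (1 : ℝ)) : chi 0 x = 1 := by
  simp [chi]

lemma chi_nsmul (n : ℕ) (g : Fin 3 → ℤ) (x : Fin 3 → AddCircle (1 : ℝ)) :
    chi ((n : ℤ) • g) x = chi g x ^ n := by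
  induction n with
  | zero => simp [chi_zero]
  | succ n ih => rw [pow_succ, ← ih, ← chi_add]; congr 1; push_cast; rw [add_smul, one_smul]

lemma chi_nsmul_sub (n : ℕ) (g g' : Fin 3 → ℤ) (x : Fin 3 → AddCircle (1 : ℝ))
    (hx : chi g x ^ n = chi g' x ^ n) : chi ((n : ℤ) • (g' - g)) x = 1 := by
  have h1 : chi ((n : ℤ) • (g' - g)) x * chi ((n : ℤ) • g) x = chi ((n : ℤ) • g') x := by
    rw [← chi_add, ← smul_add, sub_add_cancel]
  rw [chi_nsmul n g, chi_nsmul n g', hx] at h1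
  exact mul_right_cancel₀ (pow_ne_zero n (chi_ne_zero g' x)) (h1.trans (one_mul _).symm)

lemma chi_coe_eq_one {g : Fin 3 → ℤ} {y : Fin 3 → ℝ}
    (hg : chi g (fun i => (y i : AddCircle (1 : ℝ))) = 1) :
    ∃ n : ℤ, (n : ℝ) = ∑ i, g i * y i := by
  rw [chi_eq_toCircle, Circle.coe_eq_one, ← AddCircle.toCircle_zero (T := 1)] at hg
  have h2 := AddCircle.injective_toCircle one_ne_zero hg
  have h3 : ((∑ i, g i * y i : ℝ) : AddCircle (1 : ℝ)) = 0 := by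
    rw [← h2]
    simp only [Fin.sum_univ_three, AddCircle.coe_add, ← zsmul_eq_mul, AddCircle.coe_zsmul]
  obtain ⟨n, hn⟩ := (AddCircle.coe_eq_zero_iff 1).1 h3
  exact ⟨n, by simpa using hn⟩

/-! ### Vanishing sums of roots of unity -/

/-- Vanishing of `∑ z_i (z_i ^ p) ^ k` for all `k` localises to the fibres of `z ^ p`. -/
lemma sum_fiber_eq_zero {ι : Type*} (S : Finset ι) (z : ι → ℂ) (p : ℕ)
    (hz : ∀ k : ℕ, ∑ i ∈ S, z i ^ (1 + p * k) = 0) (u : ℂ) :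
    ∑ i ∈ S with z i ^ p = u, z i = 0 := by
  classical
  have key : ∀ P : Polynomial ℂ, ∑ i ∈ S, z i * P.eval (z i ^ p) = 0 := by
    intro P
    simp only [Polynomial.eval_eq_sum_range, Finset.mul_sum]
    rw [Finset.sum_comm]
    refine Finset.sum_eq_zero fun k _ => ?_
    have : ∑ i ∈ S, z i * (P.coeff k * (z i ^ p) ^ k)
        = P.coeff k * ∑ i ∈ S, z i ^ (1 + p * k) := by
      rw [Finset.mul_sum]
      refine Finset.sum_congr rfl fun i _ => ?_
      rw [pow_add, pow_one, pow_mul]; ring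
    rw [this, hz, mul_zero]
  -- `P` interpolates the indicator function of `u` on the values of `z ^ p`.
  have hP := key (Lagrange.interpolate (S.image fun i => z i ^ p) id
    (fun w => if w = u then 1 else 0))
  rw [Finset.sum_filter]
  refine Eq.trans ?_ hP
  refine Finset.sum_congr rfl fun i hi => ?_
  have := Lagrange.eval_interpolate_at_node (s := S.image fun i => z i ^ p) (v := id)
    (fun w : ℂ => if w = u then (1 : ℂ) else 0) (Function.injective_id.injOn)
    (Finset.mem_image_of_mem (fun i => z i ^ p) hi)
  simp only [id] at this
  rw [this]
  split_ifs <;> simp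

/-- A vanishing sum of nonzero complex numbers with the same `p`-th power has a number of terms
divisible by `p`: writing it as `z₀ Q(ζ)` with `Q ∈ ℤ[X]`, `Φ_p ∣ Q` and hence
`p = Φ_p(1) ∣ Q(1)`. -/
lemma dvd_card_of_sum_eq_zero {ι : Type*} (S : Finset ι) (z : ι → ℂ) (p : ℕ) (hp : p.Prime)
    (hz0 : ∀ i ∈ S, z i ≠ 0) (u : ℂ) (hu : ∀ i ∈ S, z i ^ p = u) (hsum : ∑ i ∈ S, z i = 0) :
    p ∣ S.card := by
  classical
  rcases S.eq_empty_or_nonempty with rfl | ⟨i₀, hi₀⟩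
  · simp
  have : NeZero p := ⟨hp.ne_zero⟩
  have : Fact p.Prime := ⟨hp⟩
  obtain ⟨ζ, hζ⟩ : ∃ ζ : ℂ, IsPrimitiveRoot ζ p := ⟨_, Complex.isPrimitiveRoot_exp p hp.ne_zero⟩
  have hex : ∀ i, ∃ j : ℕ, i ∈ S → z i = z i₀ * ζ ^ j := by
    intro i
    by_cases hi : i ∈ S
    · have : (z i / z i₀) ^ p = 1 := by
        rw [div_pow, hu i hi, hu i₀ hi₀, div_self]
        rw [← hu i₀ hi₀]; exact pow_ne_zero _ (hz0 _ hi₀)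
      obtain ⟨j, _, hj⟩ := hζ.eq_pow_of_pow_eq_one this
      exact ⟨j, fun _ => by rw [hj, mul_div_cancel₀ _ (hz0 _ hi₀)]⟩
    · exact ⟨0, fun h => absurd h hi⟩
  choose j hj using hex
  let Q : Polynomial ℤ := ∑ i ∈ S, Polynomial.X ^ j i
  have hQ : Polynomial.aeval ζ Q = 0 := by
    have h1 : z i₀ * Polynomial.aeval ζ Q = 0 := by
      simp only [Q, map_sum, map_pow, Polynomial.aeval_X, Finset.mul_sum]
      rw [← hsum]
      exact Finset.sum_congr rfl fun i hi => (hj i hi).symm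
    exact (mul_eq_zero.1 h1).resolve_left (hz0 _ hi₀)
  have hdvd : Polynomial.cyclotomic p ℤ ∣ Q := by
    rw [Polynomial.cyclotomic_eq_minpoly hζ hp.pos]
    exact minpoly.isIntegrallyClosed_dvd (hζ.isIntegral hp.pos) hQ
  have h1 := Polynomial.eval_dvd (x := (1 : ℤ)) hdvd
  rw [Polynomial.eval_one_cyclotomic_prime] at h1
  simp only [Q, Polynomial.eval_finsetSum, Polynomial.eval_pow, Polynomial.eval_X, one_pow,
    Finset.sum_const, nsmul_eq_mul, mul_one] at h1
  exact_mod_cast h1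

/-! ### Rational lines in the torus -/

/-- The intersection of two kernels of independent characters lies in finitely many rational
lines, with direction the cross product. -/
lemma exists_finset_lines (h k : Fin 3 → ℤ) (hk : crossProduct h k ≠ 0) :
    ∃ R : Finset (Fin 3 → ℚ), ∀ x : Fin 3 → AddCircle (1 : ℝ), chi h x = 1 → chi k x = 1 →
      ∃ ρ ∈ R, ∃ t : ℝ,
        x = fun m => (((ρ m : ℝ) + t * (crossProduct h k) m : ℝ) : AddCircle (1 : ℝ)) := by
  classical
  set v := crossProduct h k with hv
  -- By Cramer, `sol (a, b)` solves `⟨h, y⟩ = a`, `⟨k, y⟩ = b`.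
  let sol : ℤ × ℤ → Fin 3 → ℚ := fun ab m =>
    (ab.1 * (crossProduct k v) m + ab.2 * (crossProduct v h) m : ℤ) / (∑ i, v i * v i : ℤ)
  let B : (Fin 3 → ℤ) → Finset ℤ := fun g => Finset.Icc (-∑ i, |g i|) (∑ i, |g i|)
  have hB : ∀ (g : Fin 3 → ℤ) (y : Fin 3 → ℝ), (∀ i, y i ∈ Set.Ico (0 : ℝ) 1) → ∀ n : ℤ,
      (n : ℝ) = ∑ i, g i * y i → n ∈ B g := by
    intro g y hy n hn
    have h1 : |(n : ℝ)| ≤ ∑ i, |(g i : ℝ)| := by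
      rw [hn]
      refine (Finset.abs_sum_le_sum_abs _ _).trans (Finset.sum_le_sum fun i _ => ?_)
      rw [abs_mul, abs_of_nonneg (hy i).1]
      exact mul_le_of_le_one_right (abs_nonneg _) (hy i).2.le
    have h2 : |n| ≤ ∑ i, |g i| := by exact_mod_cast h1
    exact Finset.mem_Icc.2 (abs_le.1 h2)
  refine ⟨(B h ×ˢ B k).image sol, fun x hxh hxk => ?_⟩
  have hlift : ∀ i, ∃ y : ℝ, y ∈ Set.Ico (0 : ℝ) 1 ∧ (y : AddCircle (1 : ℝ)) = x i := by
    intro i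
    obtain ⟨y, hy, hyx⟩ := AddCircle.eq_coe_Ico (p := (1 : ℝ)) (x i)
    exact ⟨y, hy, hyx⟩
  choose y hy hyx using hlift
  obtain rfl : (fun i => (y i : AddCircle (1 : ℝ))) = x := funext hyx
  obtain ⟨a, ha⟩ := chi_coe_eq_one hxh
  obtain ⟨b, hb⟩ := chi_coe_eq_one hxk
  have hvv : (∑ i, (v i : ℝ) * v i) ≠ 0 := by
    intro h0
    apply hk
    have h1 : ∑ i, v i * v i = 0 := by exact_mod_cast h0
    funext i
    have := (Finset.sum_eq_zero_iff_of_nonneg (fun i _ => mul_self_nonneg (v i))).1 h1 i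
      (Finset.mem_univ i)
    exact mul_self_eq_zero.1 this
  refine ⟨sol (a, b), Finset.mem_image_of_mem _
    (Finset.mem_product.2 ⟨hB h y hy a ha, hB k y hy b hb⟩),
    (∑ i, v i * y i) / (∑ i, (v i : ℝ) * v i), ?_⟩
  funext m
  congr 1
  simp only [sol]
  push_cast
  rw [div_mul_eq_mul_div, ← add_div, eq_div_iff hvv, ha, hb]
  have e0 : v 0 = h 1 * k 2 - h 2 * k 1 := by simp [hv, cross_apply]
  have e1 : v 1 = h 2 * k 0 - h 0 * k 2 := by simp [hv, cross_apply]
  have e2 : v 2 = h 0 * k 1 - h 1 * k 0 := by simp [hv, cross_apply]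
  clear_value v
  fin_cases m <;> simp [cross_apply, Fin.sum_univ_three, e0, e1, e2] <;> ring

/-- Translating by an integer vector whose cross product with `h` vanishes preserves membership in
a flat parallel to `h`. -/
lemma mem_of_cross_eq_zero {h g g' : Fin 3 → ℤ} (hh : h ≠ 0) (hc : crossProduct h (g' - g) = 0)
    {ℓ : AffineSubspace ℝ (Fin 3 → ℝ)} (hℓ : coe3 h ∈ ℓ.direction) (hg : coe3 g ∈ ℓ) :
    coe3 g' ∈ ℓ := by
  obtain ⟨i, hi⟩ := Function.ne_iff.1 hh
  have hi' : (h i : ℝ) ≠ 0 := by exact_mod_cast hi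
  have c0 := congrFun hc 0
  have c1 := congrFun hc 1
  have c2 := congrFun hc 2
  simp [cross_apply] at c0 c1 c2
  have hmul : ∀ j, h i * (g' j - g j) = (g' i - g i) * h j := by
    intro j
    fin_cases i <;> fin_cases j <;> simp <;> linarith
  have hd : coe3 g' = (((g' i - g i : ℤ) : ℝ) / h i) • coe3 h +ᵥ coe3 g := by
    funext j
    have := hmul j
    have h2 : (h i : ℝ) * (g' j - g j) = (g' i - g i) * h j := by exact_mod_cast this
    simp only [coe3, vadd_eq_add, Pi.add_apply, Pi.smul_apply, smul_eq_mul]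
    push_cast
    rw [div_mul_eq_mul_div, ← h2, mul_div_cancel_left₀ _ hi']
    ring
  rw [hd]
  exact AffineSubspace.vadd_mem_of_mem_direction (Submodule.smul_mem _ _ hℓ) hg

theorem lines_divisible_or_spectral_support_in_rational_lines
    (F : Set (Fin 3 → ℤ)) (hF : F.Finite) (h0 : (0 : Fin 3 → ℤ) ∈ F)
    (p : ℕ) (hp : p.Prime) (hpow : ∃ m : ℕ, F.ncard = p ^ m)
    (h : Fin 3 → ℤ) (hh : h ≠ 0) :
    (∀ ℓ : AffineSubspace ℝ (Fin 3 → ℝ),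
      Module.finrank ℝ ℓ.direction = 1 → coe3 h ∈ ℓ.direction →
        p ∣ {x ∈ F | coe3 x ∈ ℓ}.ncard) ∨
    (∃ (R : Finset (Fin 3 → ℚ)) (V : Finset (Fin 3 → ℤ)),
      (∀ v ∈ V, v ≠ 0) ∧
      ∀ x : Fin 3 → AddCircle (1 : ℝ), chi h x = 1 →
        (∀ α : ℕ, Nat.Coprime α F.ncard → ∑ g ∈ hF.toFinset, chi ((α : ℤ) • g) x = 0) →
        ∃ ρ ∈ R, ∃ v ∈ V, ∃ t : ℝ,
          x = fun m => (((ρ m : ℝ) + t * v m : ℝ) : AddCircle (1 : ℝ))) := by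
  classical
  obtain ⟨m, hm⟩ := hpow
  by_cases H : ∀ x : Fin 3 → AddCircle (1 : ℝ), chi h x = 1 →
      (∀ α : ℕ, Nat.Coprime α F.ncard → ∑ g ∈ hF.toFinset, chi ((α : ℤ) • g) x = 0) →
      ∃ q ∈ hF.toFinset ×ˢ hF.toFinset, crossProduct h ((p : ℤ) • (q.2 - q.1)) ≠ 0 ∧
        chi ((p : ℤ) • (q.2 - q.1)) x = 1
  · right
    have hR : ∀ k : Fin 3 → ℤ, ∃ R : Finset (Fin 3 → ℚ), crossProduct h k ≠ 0 →
        ∀ x : Fin 3 → AddCircle (1 : ℝ), chi h x = 1 → chi k x = 1 → ∃ ρ ∈ R, ∃ t : ℝ,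
          x = fun m => (((ρ m : ℝ) + t * (crossProduct h k) m : ℝ) : AddCircle (1 : ℝ)) := by
      intro k
      by_cases hk : crossProduct h k = 0
      · exact ⟨∅, fun h => absurd hk h⟩
      · obtain ⟨R, hR⟩ := exists_finset_lines h k hk
        exact ⟨R, fun _ => hR⟩
    choose R hR using hR
    let K := (hF.toFinset ×ˢ hF.toFinset).image fun q => (p : ℤ) • (q.2 - q.1)
    refine ⟨K.biUnion R, (K.image fun k => crossProduct h k).filter (· ≠ 0),
      fun v hv => (Finset.mem_filter.1 hv).2, fun x hx hs => ?_⟩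
    obtain ⟨q, hq, hc, hqx⟩ := H x hx hs
    have hqK : (p : ℤ) • (q.2 - q.1) ∈ K := Finset.mem_image_of_mem _ hq
    obtain ⟨ρ, hρ, t, ht⟩ := hR _ hc x hx hqx
    exact ⟨ρ, Finset.mem_biUnion.2 ⟨_, hqK, hρ⟩, _,
      Finset.mem_filter.2 ⟨Finset.mem_image_of_mem _ hqK, hc⟩, t, ht⟩
  · left
    push Not at H
    obtain ⟨x, hx, hs, H⟩ := H
    intro ℓ _ hℓ
    have hclass : ∀ u : ℂ, p ∣ (hF.toFinset.filter fun g => chi g x ^ p = u).card := by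
      intro u
      refine dvd_card_of_sum_eq_zero _ (fun g => chi g x) p hp (fun g _ => chi_ne_zero g x) u
        (fun g hg => (Finset.mem_filter.1 hg).2)
        (sum_fiber_eq_zero hF.toFinset (fun g => chi g x) p (fun k => ?_) u)
      have hcop : Nat.Coprime (1 + p * k) F.ncard := by
        rw [hm]
        exact Nat.Coprime.pow_right _ (by simp)
      simpa only [chi_nsmul] using hs _ hcop
    have hset : {g ∈ F | coe3 g ∈ ℓ} = ↑(hF.toFinset.filter fun g => coe3 g ∈ ℓ) := by
      ext g; simp
    rw [hset, Set.ncard_coe_finset, Finset.card_eq_sum_card_image (fun g => chi g x ^ p)]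
    refine Finset.dvd_sum fun u hu => ?_
    obtain ⟨g, hg, hgu⟩ := Finset.mem_image.1 hu
    obtain ⟨hgF, hgℓ⟩ := Finset.mem_filter.1 hg
    -- The class of `g` is contained in `ℓ`.
    refine (congrArg (fun S : Finset _ => p ∣ S.card) ?_).mpr (hclass u)
    ext g'
    simp only [Finset.mem_filter]
    refine ⟨fun h' => ⟨h'.1.1, h'.2⟩, fun h' => ⟨⟨h'.1, ?_⟩, h'.2⟩⟩
    have hc : crossProduct h ((p : ℤ) • (g' - g)) = 0 := by
      by_contra hc
      exact H (g, g') (Finset.mem_product.2 ⟨hgF, h'.1⟩) hc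
        (chi_nsmul_sub p g g' x (hgu.trans h'.2.symm))
    rw [map_smul] at hc
    exact mem_of_cross_eq_zero hh
      ((smul_eq_zero.1 hc).resolve_left (by exact_mod_cast hp.ne_zero)) hℓ hgℓ
end

section
/- Let F ⊆ ℤ³ be a cluster containing the origin and p a prime. Let ρ be a rational point in ℝ³/ℤ³ and v a nonzero vector in ℤ³ such that infinitely many points of the set {ρ + tv ∈ ℝ³/ℤ³ : t ∈ ℝ} lie in Z := ⋂_{α coprime to p} Z(Σ_{g∈F} χ_{αg}). Then every plane in ℝ³ parallel to {w ∈ ℝ³ : ⟨w, v⟩ = 0} intersects F in a set of size divisible by p. -/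
open Polynomial in
/-- The polynomial `∑ X^{n i mod p^k}` is divisible by `Φ_{p^k}`; evaluating at `1` gives the
claim. -/
lemma prime_dvd_card_of_sum_eq_zero {ι : Type*} (s : Finset ι) (n : ι → ℤ) {p : ℕ}
    (hp : p.Prime) (k : ℕ) {ζ : ℂ} (hζ : IsPrimitiveRoot ζ (p ^ k))
    (h : ∑ i ∈ s, ζ ^ n i = 0) : p ∣ s.card := by
  have hq : 0 < p ^ k := pow_pos hp.pos k
  have hqz : ((p ^ k : ℕ) : ℤ) ≠ 0 := by exact_mod_cast hq.ne'
  have hζ0 : ζ ≠ 0 := hζ.ne_zero hq.ne'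
  set P : ℤ[X] := ∑ i ∈ s, X ^ (n i % (p ^ k : ℕ)).toNat with hP
  have hroot : aeval ζ P = 0 := by
    rw [hP, map_sum, ← h]
    refine Finset.sum_congr rfl fun i _ => ?_
    rw [map_pow, aeval_X, ← zpow_natCast, Int.toNat_of_nonneg (Int.emod_nonneg _ hqz)]
    conv_rhs => rw [← Int.emod_add_mul_ediv (n i) (p ^ k : ℕ)]
    rw [zpow_add₀ hζ0, zpow_mul, zpow_natCast, hζ.pow_eq_one, one_zpow, mul_one]
  have hdvd : cyclotomic (p ^ k) ℤ ∣ P := by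
    rw [cyclotomic_eq_minpoly hζ hq]
    exact minpoly.isIntegrallyClosed_dvd (hζ.isIntegral hq) hroot
  have hev : eval 1 (cyclotomic (p ^ k) ℤ) ∣ (s.card : ℤ) := by
    have h1 := eval_dvd (x := (1 : ℤ)) hdvd
    simpa [hP, eval_finsetSum] using h1
  rcases k with _ | k
  · simp at hev
    simp [hev]
  · have := Fact.mk hp
    rw [eval_one_cyclotomic_prime_pow] at hev
    exact_mod_cast hev

open Polynomial in
/-- If a Laurent polynomial `∑ a i * w ^ e i` has infinitely many nonzero zeros, then all its
coefficients vanish. -/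
lemma sum_filter_eq_zero {ι : Type*} (s : Finset ι) (a : ι → ℂ) (e : ι → ℤ) (W : Set ℂ)
    (hW : W.Infinite) (hW0 : ∀ w ∈ W, w ≠ 0)
    (h : ∀ w ∈ W, ∑ i ∈ s, a i * w ^ e i = 0) (c : ℤ) :
    ∑ i ∈ s with e i = c, a i = 0 := by
  -- Multiplying by `X ^ K` clears all negative exponents.
  set K : ℤ := |c| + ∑ i ∈ s, |e i| with hK
  have hKe : ∀ i ∈ s, 0 ≤ e i + K := fun i hi => by
    have h1 := Finset.single_le_sum (f := fun i => |e i|) (fun i _ => abs_nonneg _) hi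
    have h2 := neg_abs_le (e i)
    have h3 := abs_nonneg c
    omega
  have hKc : 0 ≤ c + K := by
    have h1 : 0 ≤ ∑ i ∈ s, |e i| := Finset.sum_nonneg fun i _ => abs_nonneg _
    have h2 := neg_abs_le c
    omega
  set Q : ℂ[X] := ∑ i ∈ s, C (a i) * X ^ (e i + K).toNat with hQ
  have hQ0 : Q = 0 := by
    refine eq_zero_of_infinite_isRoot Q (hW.mono fun w hw => ?_)
    have hw0 := hW0 w hw
    have hval : eval w Q = (∑ i ∈ s, a i * w ^ e i) * w ^ K := by
      rw [hQ, eval_finsetSum, Finset.sum_mul]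
      refine Finset.sum_congr rfl fun i hi => ?_
      rw [eval_mul, eval_C, eval_pow, eval_X, ← zpow_natCast, Int.toNat_of_nonneg (hKe i hi),
        zpow_add₀ hw0, mul_assoc]
    change eval w Q = 0
    rw [hval, h w hw, zero_mul]
  have hcoeff : Q.coeff (c + K).toNat = 0 := by rw [hQ0, coeff_zero]
  rw [hQ, finsetSum_coeff] at hcoeff
  rw [Finset.sum_filter]
  refine Eq.trans ?_ hcoeff
  refine Finset.sum_congr rfl fun i hi => ?_
  have h1 := hKe i hi
  rw [coeff_C_mul_X_pow]
  refine if_congr ?_ rfl rfl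
  omega

lemma chi_coe (g : Fin 3 → ℤ) (y : Fin 3 → ℝ) :
    chi g (fun m => (y m : AddCircle (1 : ℝ)))
      = Complex.exp (2 * Real.pi * Complex.I * ∑ m, (g m : ℂ) * (y m : ℂ)) := by
  unfold chi
  rw [Finset.mul_sum, Complex.exp_sum]
  refine Finset.prod_congr rfl fun m _ => ?_
  rw [← AddCircle.coe_zsmul, AddCircle.toCircle_apply_mk, Circle.coe_exp]
  congr 1
  push_cast [zsmul_eq_mul]
  ring

theorem planes_divisible_of_infinitely_many_points_of_rational_line_in_spectrum
    (F : Set (Fin 3 → ℤ)) (hF : F.Finite) (h0 : (0 : Fin 3 → ℤ) ∈ F)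
    (p : ℕ) (hp : p.Prime)
    (ρ : Fin 3 → ℚ) (v : Fin 3 → ℤ) (hv : v ≠ 0)
    (hinf : {x : Fin 3 → AddCircle (1 : ℝ) |
        (∃ t : ℝ, x = fun m => (((ρ m : ℝ) + t * v m : ℝ) : AddCircle (1 : ℝ))) ∧
        ∀ α : ℕ, Nat.Coprime α p →
          ∑ g ∈ hF.toFinset, chi ((α : ℤ) • g) x = 0}.Infinite) :
    ∀ π : AffineSubspace ℝ (Fin 3 → ℝ),
      (∀ w : Fin 3 → ℝ, w ∈ π.direction ↔ ∑ i, w i * (v i : ℝ) = 0) →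
      p ∣ {x ∈ F | coe3 x ∈ π}.ncard := by
  classical
  intro π hπ
  -- Write `ρ = r / (p ^ k * M)` with `M` coprime to `p`.
  obtain ⟨N, hN0, r, hr⟩ : ∃ N : ℕ, N ≠ 0 ∧ ∃ r : Fin 3 → ℤ, ∀ m, ρ m * N = r m := by
    refine ⟨∏ m, (ρ m).den, Finset.prod_ne_zero_iff.2 fun m _ => (ρ m).den_ne_zero,
      fun m => (ρ m).num * ∏ j ∈ Finset.univ.erase m, ((ρ j).den : ℤ), fun m => ?_⟩
    rw [← Finset.mul_prod_erase Finset.univ (fun j => (ρ j).den) (Finset.mem_univ m)]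
    push_cast
    rw [← mul_assoc, Rat.mul_den_eq_num]
  obtain ⟨k, M, hpM, hNM⟩ := Nat.exists_eq_pow_mul_and_not_dvd hN0 p hp.ne_one
  have hM0 : M ≠ 0 := by rintro rfl; simp at hpM
  have hcop : Nat.Coprime M p := ((Nat.Prime.coprime_iff_not_dvd hp).2 hpM).symm
  have hq0 : p ^ k ≠ 0 := pow_ne_zero k hp.ne_zero
  have hMρ : ∀ m, (M : ℂ) * ((ρ m : ℝ) : ℂ) = (r m : ℂ) / ((p ^ k : ℕ) : ℂ) := by
    intro m
    have h1 : (((ρ m * N : ℚ)) : ℂ) = ((r m : ℚ) : ℂ) := by rw [hr m]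
    rw [hNM] at h1
    rw [eq_div_iff (by exact_mod_cast hq0)]
    push_cast at h1 ⊢
    rw [← h1]
    ring
  set ζ : ℂ := Complex.exp (2 * Real.pi * Complex.I / (p ^ k : ℕ)) with hζdef
  have hζ : IsPrimitiveRoot ζ (p ^ k) := Complex.isPrimitiveRoot_exp _ hq0
  -- The zeros on the line, in the coordinate `θ = t mod 1`.
  set Θ : Set (AddCircle (1 : ℝ)) := {θ | ∃ t : ℝ, θ = (t : AddCircle (1 : ℝ)) ∧
    ∑ g ∈ hF.toFinset, chi ((M : ℤ) • g)
      (fun m => (((ρ m : ℝ) + t * v m : ℝ) : AddCircle (1 : ℝ))) = 0} with hΘ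
  have hΘinf : Θ.Infinite := by
    refine Set.Infinite.of_image
      (fun θ => fun m => (((ρ m : ℝ) : AddCircle (1 : ℝ)) + v m • θ)) (hinf.mono ?_)
    rintro x ⟨⟨t, rfl⟩, hx⟩
    refine ⟨(t : AddCircle (1 : ℝ)), ⟨t, rfl, hx M hcop⟩, ?_⟩
    funext m
    beta_reduce
    rw [← AddCircle.coe_zsmul, ← AddCircle.coe_add, zsmul_eq_mul, mul_comm]
  set W : Set ℂ := (fun θ : AddCircle (1 : ℝ) => (AddCircle.toCircle θ : ℂ)) '' Θ with hWdef
  have hWinf : W.Infinite := hΘinf.image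
    ((Circle.coe_injective.comp (AddCircle.injective_toCircle one_ne_zero)).injOn)
  have hW0 : ∀ w ∈ W, w ≠ 0 := by
    rintro _ ⟨θ, -, rfl⟩
    exact Circle.coe_ne_zero _
  have hWsum : ∀ w ∈ W, ∑ g ∈ hF.toFinset,
      ζ ^ (∑ m, g m * r m) * w ^ ((M : ℤ) * ∑ m, g m * v m) = 0 := by
    rintro _ ⟨_, ⟨t, rfl, ht⟩, rfl⟩
    refine Eq.trans ?_ ht
    refine Finset.sum_congr rfl fun g _ => ?_
    beta_reduce
    rw [chi_coe, AddCircle.toCircle_apply_mk, Circle.coe_exp, hζdef, ← Complex.exp_int_mul,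
      ← Complex.exp_int_mul, ← Complex.exp_add]
    congr 1
    have h0 := hMρ 0
    have h1 := hMρ 1
    have h2 := hMρ 2
    simp only [Fin.sum_univ_three, Pi.smul_apply, smul_eq_mul]
    push_cast at h0 h1 h2 ⊢
    linear_combination (-(2 * Real.pi * Complex.I * g 0)) * h0
      - (2 * Real.pi * Complex.I * g 1) * h1 - (2 * Real.pi * Complex.I * g 2) * h2
  rcases Set.eq_empty_or_nonempty {x ∈ F | coe3 x ∈ π} with hempty | ⟨g₀, hg₀F, hg₀⟩
  · rw [hempty]
    simp
  -- The plane through `g₀` cuts out the level set of `⟨·, v⟩` at `⟨g₀, v⟩`.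
  have hset : {x ∈ F | coe3 x ∈ π} = ((hF.toFinset.filter fun g =>
      (M : ℤ) * ∑ m, g m * v m = (M : ℤ) * ∑ m, g₀ m * v m : Finset (Fin 3 → ℤ)) :
        Set (Fin 3 → ℤ)) := by
    ext g
    simp only [Set.mem_ofPred_eq, Finset.coe_filter, Set.Finite.mem_toFinset]
    refine and_congr_right fun _ => ?_
    rw [mul_right_inj' (by exact_mod_cast hM0), ← AffineSubspace.vsub_right_mem_direction_iff_mem hg₀,
      hπ, ← sub_eq_zero (a := ∑ m, g m * v m), ← Finset.sum_sub_distrib,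
      ← Int.cast_eq_zero (α := ℝ)]
    simp only [coe3, vsub_eq_sub, Pi.sub_apply]
    push_cast
    simp only [sub_mul]
  rw [hset, Set.ncard_coe_finset]
  exact prime_dvd_card_of_sum_eq_zero _ _ hp k hζ
    (sum_filter_eq_zero hF.toFinset _ _ W hWinf hW0 hWsum _)
end
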